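/- arXiv:math/0406242 — 2 statements merged into one kernel-verified Lean document; each statement's English description precedes it below -/
import Mathlib

section
/- The function 𝒱 is concave on the closed simplex S = {(x,y,z) ∈ ℝ³ : x ≥ 0, y ≥ 0, z ≥ 0, x + y + z = π}; that is, for all p, q ∈ S and all t ∈ [0,1], 𝒱(t·p + (1−t)·q) ≥ t·𝒱(p) + (1−t)·𝒱(q). (The volume of an ideal tetrahedron is a concave function of its dihedral angles.) -/
/-- The Lobachevsky-type integral `∫₀ˣ log(2 sin u) du`. -/
noncomputable def lob (x : ℝ) : ℝ := ∫ u in (0:ℝ)..x, Real.log (2 * Real.sin u)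

/-- The volume `𝒱(x,y,z)` of the ideal hyperbolic tetrahedron with dihedral angles
`x, y, z`. -/
noncomputable def idealVol (p : ℝ × ℝ × ℝ) : ℝ := -lob p.1 - lob p.2.1 - lob p.2.2

/-- The closed simplex of nonnegative angle triples summing to `π`. -/
def angleSimplex : Set (ℝ × ℝ × ℝ) :=
  {p | 0 ≤ p.1 ∧ 0 ≤ p.2.1 ∧ 0 ≤ p.2.2 ∧ p.1 + p.2.1 + p.2.2 = Real.pi}


theorem lob_aux_int (a b : ℝ) :
    IntervalIntegrable (fun u => Real.log (2 * Real.sin u)) MeasureTheory.volume a b := by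
  have h := MeromorphicOn.intervalIntegrable_log_norm (a := a) (b := b)
    (f := fun u : ℝ => 2 * Real.sin u) (by
      apply AnalyticOnNhd.meromorphicOn
      intro x _
      fun_prop)
  simpa [Real.norm_eq_abs, Real.log_abs, -norm_mul, -abs_mul] using h

theorem lob_aux_cont : Continuous lob :=
  intervalIntegral.continuous_primitive lob_aux_int 0

theorem lob_aux_deriv {x : ℝ} (h0 : 0 < x) (h1 : x < Real.pi) :
    HasDerivAt lob (Real.log (2 * Real.sin x)) x := by
  have hs := Real.sin_pos_of_pos_of_lt_pi h0 h1
  refine intervalIntegral.integral_hasDerivAt_right (lob_aux_int 0 x) ?_ ?_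
  · exact MeasureTheory.StronglyMeasurable.stronglyMeasurableAtFilter
      (Measurable.stronglyMeasurable (by fun_prop))
  · exact ContinuousAt.log (by fun_prop) (by positivity)

theorem logsin_aux_deriv {x : ℝ} (h0 : 0 < x) (h1 : x < Real.pi) :
    HasDerivAt (fun u => Real.log (2 * Real.sin u)) (Real.cos x / Real.sin x) x := by
  have hs := Real.sin_pos_of_pos_of_lt_pi h0 h1
  have := ((Real.hasDerivAt_sin x).const_mul 2).log (by positivity)
  convert this using 1
  field_simp

theorem quad_aux {a b c d e f : ℝ} (ha : 0 < a) (hb : 0 < b) (hc : 0 < c)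
    (hs : a + b + c = Real.pi) (hd : d + e + f = 0) :
    0 ≤ d ^ 2 * (Real.cos a / Real.sin a) + e ^ 2 * (Real.cos b / Real.sin b)
      + f ^ 2 * (Real.cos c / Real.sin c) := by
  have sa := Real.sin_pos_of_pos_of_lt_pi ha (by linarith)
  have sb := Real.sin_pos_of_pos_of_lt_pi hb (by linarith)
  have sc := Real.sin_pos_of_pos_of_lt_pi hc (by linarith)
  have hc' : c = Real.pi - (a + b) := by linarith
  have e1 : Real.sin c = Real.sin a * Real.cos b + Real.cos a * Real.sin b := by
    rw [hc', Real.sin_pi_sub, Real.sin_add]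
  have e2 : Real.cos c = Real.sin a * Real.sin b - Real.cos a * Real.cos b := by
    rw [hc', Real.cos_pi_sub, Real.cos_add]; ring
  have hf : f = -(d + e) := by linarith
  have pa := Real.sin_sq_add_cos_sq a
  have pb := Real.sin_sq_add_cos_sq b
  have pc := Real.sin_sq_add_cos_sq c
  have key : d ^ 2 * (Real.cos a / Real.sin a) + e ^ 2 * (Real.cos b / Real.sin b)
      + f ^ 2 * (Real.cos c / Real.sin c)
      = ((d * Real.sin b + e * Real.sin a * Real.cos c) ^ 2
        + (e * Real.sin a * Real.sin c) ^ 2) / (Real.sin a * Real.sin b * Real.sin c) := by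
    have num : d ^ 2 * Real.cos a * Real.sin b * Real.sin c
        + e ^ 2 * Real.cos b * Real.sin a * Real.sin c
        + f ^ 2 * Real.cos c * Real.sin a * Real.sin b
        = (d * Real.sin b + e * Real.sin a * Real.cos c) ^ 2
        + (e * Real.sin a * Real.sin c) ^ 2 := by
      have r : (d * Real.sin b + e * Real.sin a * Real.cos c) ^ 2
        + (e * Real.sin a * Real.sin c) ^ 2 = d ^ 2 * Real.sin b ^ 2 + e ^ 2 * Real.sin a ^ 2
          + 2 * d * e * Real.sin a * Real.sin b * Real.cos c := by
        linear_combination (e * Real.sin a) ^ 2 * pc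
      rw [r, e1, e2, hf]
      linear_combination d ^ 2 * Real.sin b ^ 2 * pa + e ^ 2 * Real.sin a ^ 2 * pb
    rw [← num]
    field_simp
  rw [key]
  positivity

theorem conc_int {a b c a' b' c' : ℝ} (ha : 0 < a) (hb : 0 < b) (hc : 0 < c)
    (hs : a + b + c = Real.pi) (ha' : 0 < a') (hb' : 0 < b') (hc' : 0 < c')
    (hs' : a' + b' + c' = Real.pi) {t : ℝ} (ht : t ∈ Set.Icc (0 : ℝ) 1) :
    t * idealVol (a, b, c) + (1 - t) * idealVol (a', b', c')
      ≤ idealVol (t * a + (1 - t) * a', t * b + (1 - t) * b', t * c + (1 - t) * c') := by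
  have pos : ∀ {x y s : ℝ}, 0 < x → 0 < y → s ∈ Set.Icc (0 : ℝ) 1 → 0 < y + s * (x - y) := by
    intro x y s hx hy hs
    obtain ⟨h0, h1⟩ := hs
    rcases h0.eq_or_lt with h | h
    · subst h; simpa using hy
    · have := mul_pos h hx
      have := mul_nonneg (sub_nonneg.2 h1) hy.le
      nlinarith
  have lin : ∀ (x y s : ℝ), HasDerivAt (fun s => y + s * (x - y)) (x - y) s := by
    intro x y s
    simpa using ((hasDerivAt_id s).mul_const (x - y)).const_add y
  have d1 : ∀ {x y s : ℝ}, 0 < y + s * (x - y) → y + s * (x - y) < Real.pi →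
      HasDerivAt (fun s => lob (y + s * (x - y)))
        (Real.log (2 * Real.sin (y + s * (x - y))) * (x - y)) s := by
    intro x y s h0 h1
    exact (lob_aux_deriv h0 h1).comp s (lin x y s)
  have d2 : ∀ {x y s : ℝ}, 0 < y + s * (x - y) → y + s * (x - y) < Real.pi →
      HasDerivAt (fun s => Real.log (2 * Real.sin (y + s * (x - y))) * (x - y))
        ((Real.cos (y + s * (x - y)) / Real.sin (y + s * (x - y))) * (x - y) * (x - y)) s := by
    intro x y s h0 h1
    exact (HasDerivAt.comp s (logsin_aux_deriv h0 h1) (lin x y s)).mul_const (x - y)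
  have C : ConcaveOn ℝ (Set.Icc (0 : ℝ) 1) (fun s => -lob (a' + s * (a - a'))
      - lob (b' + s * (b - b')) - lob (c' + s * (c - c'))) := by
    have bd : ∀ s ∈ interior (Set.Icc (0 : ℝ) 1), 
        (0 < a' + s * (a - a') ∧ a' + s * (a - a') < Real.pi) ∧
        (0 < b' + s * (b - b') ∧ b' + s * (b - b') < Real.pi) ∧
        (0 < c' + s * (c - c') ∧ c' + s * (c - c') < Real.pi) ∧
        (a' + s * (a - a')) + (b' + s * (b - b')) + (c' + s * (c - c')) = Real.pi := by
      intro s hs0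
      have hs1 := interior_subset hs0
      have p1 := pos ha ha' hs1
      have p2 := pos hb hb' hs1
      have p3 := pos hc hc' hs1
      have e : (a' + s * (a - a')) + (b' + s * (b - b')) + (c' + s * (c - c')) = Real.pi := by
        linear_combination (1 - s) * hs' + s * hs
      refine ⟨⟨p1, ?_⟩, ⟨p2, ?_⟩, ⟨p3, ?_⟩, e⟩ <;> linarith
    refine concaveOn_of_hasDerivWithinAt2_nonpos (convex_Icc 0 1) ?_
      (f' := fun s => -(Real.log (2 * Real.sin (a' + s * (a - a'))) * (a - a'))
        - Real.log (2 * Real.sin (b' + s * (b - b'))) * (b - b')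
        - Real.log (2 * Real.sin (c' + s * (c - c'))) * (c - c'))
      (f'' := fun s => 
        -(Real.cos (a' + s * (a - a')) / Real.sin (a' + s * (a - a')) * (a - a') * (a - a'))
        - Real.cos (b' + s * (b - b')) / Real.sin (b' + s * (b - b')) * (b - b') * (b - b')
        - Real.cos (c' + s * (c - c')) / Real.sin (c' + s * (c - c')) * (c - c') * (c - c'))
       ?_ ?_ ?_
    · have := lob_aux_cont
      fun_prop
    · intro s hs0
      obtain ⟨⟨h1, h2⟩, ⟨h3, h4⟩, ⟨h5, h6⟩, -⟩ := bd s hs0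
      exact (((d1 h1 h2).neg.sub (d1 h3 h4)).sub (d1 h5 h6)).hasDerivWithinAt
    · intro s hs0
      obtain ⟨⟨h1, h2⟩, ⟨h3, h4⟩, ⟨h5, h6⟩, -⟩ := bd s hs0
      exact (((d2 h1 h2).neg.sub (d2 h3 h4)).sub (d2 h5 h6)).hasDerivWithinAt
    · intro s hs0
      obtain ⟨⟨h1, h2⟩, ⟨h3, h4⟩, ⟨h5, h6⟩, e⟩ := bd s hs0
      have := quad_aux h1 h3 h5 e (d := a - a') (e := b - b') (f := c - c') (by linarith)
      linarith
  have := C.2 (x := 1) (y := 0) (by simp) (by simp) ht.1 (sub_nonneg.2 ht.2) (by ring)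
  have r1 : ∀ x y : ℝ, y + (t * 1 + (1 - t) * 0) * (x - y) = t * x + (1 - t) * y := by
    intro x y; ring
  have r2 : ∀ x y : ℝ, y + 1 * (x - y) = x := by
    intro x y; ring
  have r3 : ∀ x y : ℝ, y + 0 * (x - y) = y := by
    intro x y; ring
  simp only [smul_eq_mul, r1, r2, r3] at this
  simpa only [idealVol] using this

theorem idealVol_concave :
    ∀ p ∈ angleSimplex, ∀ q ∈ angleSimplex, ∀ t ∈ Set.Icc (0:ℝ) 1,
      t * idealVol p + (1 - t) * idealVol q ≤ idealVol (t • p + (1 - t) • q) := by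
  rintro ⟨a, b, c⟩ ⟨ha, hb, hc, hs⟩ ⟨a', b', c'⟩ ⟨ha', hb', hc', hs'⟩ t ht
  simp only at ha hb hc hs ha' hb' hc' hs'
  have hcont := lob_aux_cont
  have hV : Continuous idealVol := by
    unfold idealVol
    fun_prop
  let m : ℝ → ℝ → ℝ := fun r x => (1 - r) * x + r * (Real.pi / 3)
  have hm : ∀ {x r : ℝ}, 0 ≤ x → r ∈ Set.Ioo (0 : ℝ) 1 → 0 < m r x := by
    intro x r hx hr
    have := mul_nonneg (sub_nonneg.2 hr.2.le) hx
    have := mul_pos hr.1 (div_pos Real.pi_pos (by norm_num : (0 : ℝ) < 3))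
    simp only [m]; linarith
  have hsum : ∀ {x y z : ℝ} (r : ℝ), x + y + z = Real.pi → m r x + m r y + m r z = Real.pi := by
    intro x y z r h
    simp only [m]; linear_combination (1 - r) * h
  have hmc : ∀ x, Continuous fun r => m r x := by
    intro x; simp only [m]; fun_prop
  let F : ℝ → ℝ := fun r => t * idealVol (m r a, m r b, m r c)
    + (1 - t) * idealVol (m r a', m r b', m r c')
  let G : ℝ → ℝ := fun r => idealVol (t * m r a + (1 - t) * m r a',
    t * m r b + (1 - t) * m r b', t * m r c + (1 - t) * m r c')
  have hF : Continuous F := by simp only [F, m]; fun_prop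
  have hG : Continuous G := by simp only [G, m]; fun_prop
  have hle : ∀ᶠ r in nhdsWithin (0 : ℝ) (Set.Ioi 0), F r ≤ G r := by
    filter_upwards [Ioo_mem_nhdsGT (zero_lt_one (α := ℝ))] with r hr
    exact conc_int (hm ha hr) (hm hb hr) (hm hc hr) (hsum r hs)
      (hm ha' hr) (hm hb' hr) (hm hc' hr) (hsum r hs') ht
  have := le_of_tendsto_of_tendsto (hF.continuousAt.tendsto.mono_left nhdsWithin_le_nhds)
    (hG.continuousAt.tendsto.mono_left nhdsWithin_le_nhds) hle
  simpa [F, G, m] using this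
end

section
/- Let λ ∈ (−1, 1) and let γ : ℝ → ℝ³, γ(t) = (x_t, y_t, z_t), be a path, differentiable at 0, such that x_t + y_t + z_t = π and x_t, y_t, z_t ≥ 0 for all t in some interval [0, δ) with δ > 0, with (x₀, y₀, z₀) = (0, 0, π) and derivative (d/dt)(x_t, y_t, z_t)|_{t=0} = (1+λ, 1−λ, −2). Then the right-hand derivative of t ↦ 𝒱(x_t, y_t, z_t) at 0 exists and equals −log( ((1−λ²)/4) · ((1+λ)/(1−λ))^λ ); that is, 𝒱(x_t,y_t,z_t)/t tends to this value as t → 0⁺, so exp(−(d𝒱/dt)|_{t=0⁺}) = ((1−λ²)/4) · ((1+λ)/(1−λ))^λ. -/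
open Real Filter Topology in
lemma aux_R_deriv : HasDerivAt (fun x : ℝ => ∫ u in (0:ℝ)..x, log (sinc u)) 0 0 := by
  have h := intervalIntegral.integral_hasDerivAt_right (f := fun u : ℝ => log (sinc u)) (a := 0)
    (b := 0) (by simp) (by
      refine ⟨Set.univ, Filter.univ_mem, ?_⟩
      exact ((Real.measurable_log.comp Real.continuous_sinc.measurable)).stronglyMeasurable.aestronglyMeasurable)
    (by
      refine Real.continuous_sinc.continuousAt.log ?_
      simp)
  simpa using h

open Real Filter Topology MeasureTheory in
lemma aux_int (a b : ℝ) : IntervalIntegrable (fun u : ℝ => log (2 * sin u)) volume a b := by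
  have h : IntervalIntegrable (fun u : ℝ => log 2 + log (sin u)) volume a b :=
    intervalIntegrable_const.add intervalIntegrable_log_sin
  refine h.congr_ae ?_
  have : ∀ᵐ u : ℝ, sin u ≠ 0 := by
    have hc : (Set.range (fun n : ℤ => (n : ℝ) * π)).Countable := Set.countable_range _
    filter_upwards [hc.ae_notMem volume] with u hu h0
    rw [Real.sin_eq_zero_iff] at h0
    exact hu h0
  filter_upwards [ae_restrict_of_ae this] with u hu
  rw [log_mul (by norm_num) hu]

open Real Filter Topology MeasureTheory in
lemma aux_lob (x : ℝ) (h0 : 0 < x) (hx : x < π) :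
    lob x = x * log 2 + (x * log x - x) + ∫ u in (0:ℝ)..x, log (sinc u) := by
  have hi : IntervalIntegrable (fun u : ℝ => log (sinc u)) volume 0 x := by
    apply ContinuousOn.intervalIntegrable
    refine Real.continuous_sinc.continuousOn.log ?_
    intro u hu
    rw [Set.uIcc_of_le h0.le] at hu
    rcases hu.1.eq_or_lt with h | h
    · simp [← h]
    · rw [Real.sinc_of_ne_zero h.ne']
      exact (div_pos (sin_pos_of_pos_of_lt_pi h (hu.2.trans_lt hx)) h).ne'
  have hl : IntervalIntegrable (fun u : ℝ => log u) volume 0 x := intervalIntegral.intervalIntegrable_log'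
  have e : lob x = ∫ u in (0:ℝ)..x, ((log 2 + log u) + log (sinc u)) := by
    unfold lob
    apply intervalIntegral.integral_congr_ae
    refine Eventually.of_forall fun u hu => ?_
    rw [Set.uIoc_of_le h0.le] at hu
    have hs := sin_pos_of_pos_of_lt_pi hu.1 (hu.2.trans_lt hx)
    have hu0 := hu.1
    rw [Real.sinc_of_ne_zero hu.1.ne', log_div hs.ne' hu0.ne', log_mul (by norm_num) hs.ne']
    ring
  rw [e, intervalIntegral.integral_add (intervalIntegrable_const.add hl) hi,
    intervalIntegral.integral_add intervalIntegrable_const hl]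
  simp

open Real Filter Topology MeasureTheory in
lemma aux_pi : lob π = 0 := by
  have e : lob π = ∫ u in (0:ℝ)..π, (log 2 + log (sin u)) := by
    unfold lob
    apply intervalIntegral.integral_congr_ae
    have : ∀ᵐ u : ℝ, u ≠ π := by
      filter_upwards [(Set.countable_singleton π).ae_notMem volume] with u hu
      simpa using hu
    filter_upwards [this] with u hne hu
    rw [Set.uIoc_of_le pi_pos.le] at hu
    rw [log_mul (by norm_num) (sin_pos_of_pos_of_lt_pi hu.1 (lt_of_le_of_ne hu.2 hne)).ne']
  have hs : IntervalIntegrable (fun u : ℝ => log (sin u)) volume 0 π := intervalIntegrable_log_sin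
  rw [e, intervalIntegral.integral_add intervalIntegrable_const hs,
    integral_log_sin_zero_pi]
  simp
  ring

open Real Filter Topology MeasureTheory in
lemma aux_refl (w : ℝ) : lob (π - w) = - lob w := by
  have h1 := intervalIntegral.integral_add_adjacent_intervals (aux_int 0 (π - w)) (aux_int (π - w) π)
  have h2 : (∫ u in (π - w)..π, log (2 * sin u)) = lob w := by
    have := intervalIntegral.integral_comp_sub_left (fun u => log (2 * sin u)) π (a := 0) (b := w)
    simp only [sin_pi_sub, sub_zero] at this
    exact this.symm
  have h3 := aux_pi
  rw [h2] at h1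
  unfold lob at *
  linarith

open Real Filter Topology MeasureTheory in
lemma aux_R_tendsto (f : ℝ → ℝ) (f' : ℝ) (hf : HasDerivAt f f' 0) (h0 : f 0 = 0) :
    Tendsto (fun t => (∫ u in (0:ℝ)..(f t), log (sinc u)) / t) (𝓝[>] 0) (𝓝 0) := by
  have hR : HasDerivAt (fun x : ℝ => ∫ u in (0:ℝ)..x, log (sinc u)) 0 (f 0) := by
    rw [h0]; exact aux_R_deriv
  have h := (hR.comp 0 hf).tendsto_slope_zero_right
  simp only [Function.comp, h0, zero_add, zero_mul, intervalIntegral.integral_same, sub_zero,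
    smul_eq_mul] at h
  refine h.congr fun t => ?_
  rw [div_eq_inv_mul]

open Real Filter Topology in
lemma aux_slope (f : ℝ → ℝ) (f' : ℝ) (hf : HasDerivAt f f' 0) (h0 : f 0 = 0) :
    Tendsto (fun t => f t / t) (𝓝[>] 0) (𝓝 f') := by
  have h := hf.tendsto_slope_zero_right
  simp only [h0, zero_add, sub_zero, smul_eq_mul] at h
  refine h.congr fun t => ?_
  rw [div_eq_inv_mul]

/-- Double degeneracy: along a path of angle triples, differentiable at `0`, with
`(x₀,y₀,z₀) = (0,0,π)` and derivative `(1+λ, 1−λ, −2)` for `λ ∈ (−1,1)`, the right-hand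
derivative of the volume at `0` exists and equals
`−log( ((1−λ²)/4) ((1+λ)/(1−λ))^λ )`. -/
theorem double_degeneracy (l : ℝ) (hl : l ∈ Set.Ioo (-1:ℝ) 1)
    (x y z : ℝ → ℝ) (δ : ℝ) (hδ : 0 < δ)
    (hx : HasDerivAt x (1 + l) 0) (hy : HasDerivAt y (1 - l) 0)
    (hz : HasDerivAt z (-2) 0)
    (hsum : ∀ t ∈ Set.Ico 0 δ, x t + y t + z t = Real.pi)
    (hnonneg : ∀ t ∈ Set.Ico 0 δ, 0 ≤ x t ∧ 0 ≤ y t ∧ 0 ≤ z t)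
    (hx0 : x 0 = 0) (hy0 : y 0 = 0) (hz0 : z 0 = Real.pi) :
    Filter.Tendsto (fun t => idealVol (x t, y t, z t) / t)
      (nhdsWithin 0 (Set.Ioi 0))
      (nhds (-Real.log ((1 - l ^ 2) / 4 * ((1 + l) / (1 - l)) ^ l))) := by
  obtain ⟨hl1, hl2⟩ := hl
  have p1 : 0 < 1 + l := by linarith
  have p2 : 0 < 1 - l := by linarith
  have sx := aux_slope x _ hx hx0
  have sy := aux_slope y _ hy hy0
  have hxy : HasDerivAt (fun t => x t + y t) (1 + l + (1 - l)) 0 := hx.add hy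
  have hxy0 : (fun t => x t + y t) 0 = 0 := by simp [hx0, hy0]
  have rx := aux_R_tendsto x _ hx hx0
  have ry := aux_R_tendsto y _ hy hy0
  have rxy := aux_R_tendsto _ _ hxy hxy0
  have main := ((((sx.mul (sx.log p1.ne')).neg.sub (sy.mul (sy.log p2.ne'))).add
    ((sx.add sy).mul ((sx.add sy).log (by norm_num)))).sub rx |>.sub ry).add rxy
  have hlim : -((1 + l) * Real.log (1 + l)) - (1 - l) * Real.log (1 - l)
      + (1 + l + (1 - l)) * Real.log (1 + l + (1 - l)) - 0 - 0 + 0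
      = -Real.log ((1 - l ^ 2) / 4 * ((1 + l) / (1 - l)) ^ l) := by
    have e1 : (1 - l ^ 2) / 4 = (1 + l) * (1 - l) / (2 * 2) := by ring
    have e2 : 1 + l + (1 - l) = 2 := by ring
    rw [e1, e2, Real.log_mul (by positivity) (by positivity), Real.log_rpow (by positivity),
      Real.log_div (by positivity) (by positivity), Real.log_div (by positivity) (by positivity),
      Real.log_mul (by positivity) (by positivity), Real.log_mul (by positivity) (by positivity)]
    ring
  rw [hlim] at main
  refine main.congr' ?_
  have cxy : ∀ᶠ t in nhdsWithin 0 (Set.Ioi 0), x t + y t < Real.pi := by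
    apply Filter.Eventually.filter_mono nhdsWithin_le_nhds
    apply hxy.continuousAt.eventually_lt continuousAt_const
    simpa [hx0, hy0] using Real.pi_pos
  filter_upwards [cxy, sx.eventually (lt_mem_nhds p1), sy.eventually (lt_mem_nhds p2), self_mem_nhdsWithin,
    Ioo_mem_nhdsGT hδ] with t h1 h2 h3 h4 h5
  have h4 : 0 < t := h4
  have hxt : 0 < x t := by simpa [h4] using (div_pos_iff_of_pos_right h4).1 h2
  have hyt : 0 < y t := (div_pos_iff_of_pos_right h4).1 h3
  have hzt : z t = Real.pi - (x t + y t) := by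
    have := hsum t ⟨h4.le, h5.2⟩
    linarith
  simp only [idealVol]
  rw [hzt, aux_refl, aux_lob (x t) hxt (by linarith), aux_lob (y t) hyt (by linarith),
    aux_lob (x t + y t) (by linarith) h1, ← add_div, Real.log_div hxt.ne' h4.ne',
    Real.log_div hyt.ne' h4.ne', Real.log_div (by positivity) h4.ne']
  field_simp
  ring
end
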